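/- Suppose u is a nonnegative solution of -Δu + e^u - 1 = 0 in Ω \ K where K ⊂ Ω is compact with Lebesgue measure zero, and e^u ∈ L¹(Ω \ K). If there exist η_n ∈ C_c²(Ω) with 0 ≤ η_n ≤ 1, η_n = 1 near K, and ‖Δη_n‖_{L_{P*}} + ‖η_n‖_{L¹} → 0, then u extends to a distributional solution of -Δu + e^u - 1 = 0 in all of Ω. -/

import Mathlib

open MeasureTheory Filter
open scoped Topology

noncomputable section

/-- `P*(t) = (|t|+1) ln(|t|+1) - |t|`. -/
def Pstar (t : ℝ) : ℝ := (|t| + 1) * Real.log (|t| + 1) - |t|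

/-- The Laplacian of `f : ℝ^N → ℝ`, as the trace of the second derivative. -/
def laplacian {N : ℕ} (f : EuclideanSpace ℝ (Fin N) → ℝ)
    (x : EuclideanSpace ℝ (Fin N)) : ℝ :=
  ∑ i : Fin N, iteratedFDeriv ℝ 2 f x (fun _ => EuclideanSpace.single i (1 : ℝ))

lemma young_aux (a t : ℝ) : a * |t| ≤ Real.exp a + Pstar t - a - 1 := by
  unfold Pstar
  have ht : 0 < |t| + 1 := by positivity
  set b := Real.log (|t| + 1) with hb
  have h1 : Real.exp b = |t| + 1 := Real.exp_log ht
  have h2 : (a - b) + 1 ≤ Real.exp (a - b) := Real.add_one_le_exp _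
  have h3 : Real.exp a = Real.exp b * Real.exp (a - b) := by
    rw [← Real.exp_add]; congr 1; ring
  rw [h3, h1]
  nlinarith [mul_le_mul_of_nonneg_left h2 ht.le]

lemma Pstar_continuous : Continuous Pstar := by
  unfold Pstar
  have : ∀ x : ℝ, |x| + 1 ≠ 0 := fun x => by positivity
  fun_prop (disch := assumption)

lemma Pstar_zero : Pstar 0 = 0 := by simp [Pstar]

/-- directional derivative along the i-th coordinate -/
def pd {N : ℕ} (i : Fin N) (f : EuclideanSpace ℝ (Fin N) → ℝ)
    (x : EuclideanSpace ℝ (Fin N)) : ℝ := fderiv ℝ f x (EuclideanSpace.single i (1 : ℝ))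

section helpers
variable {N : ℕ}

lemma pd_contDiff (i : Fin N) {f : EuclideanSpace ℝ (Fin N) → ℝ} {m n : WithTop ℕ∞}
    (hf : ContDiff ℝ n f) (h : m + 1 ≤ n) : ContDiff ℝ m (pd i f) :=
  (hf.fderiv_right h).clm_apply contDiff_const

lemma pd_supp (i : Fin N) {f : EuclideanSpace ℝ (Fin N) → ℝ}
    (hf : HasCompactSupport f) : HasCompactSupport (pd i f) := hf.fderiv_apply ℝ _

lemma pd_tsupp (i : Fin N) (f : EuclideanSpace ℝ (Fin N) → ℝ) :
    tsupport (pd i f) ⊆ tsupport f := tsupport_fderiv_apply_subset ℝ _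

lemma laplacian_eq {f : EuclideanSpace ℝ (Fin N) → ℝ} (hf : ContDiff ℝ 2 f) :
    laplacian f = fun x => ∑ i, pd i (pd i f) x := by
  ext x
  unfold laplacian
  refine Finset.sum_congr rfl fun i _ => ?_
  rw [iteratedFDeriv_two_apply]
  have hd : DifferentiableAt ℝ (fderiv ℝ f) x :=
    ((hf.fderiv_right (m := 1) (by norm_num)).differentiable (by norm_num)) x
  unfold pd
  rw [fderiv_clm_apply hd (differentiableAt_const _)]
  simp

lemma laplacian_continuous {f : EuclideanSpace ℝ (Fin N) → ℝ} (hf : ContDiff ℝ 2 f) :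
    Continuous (laplacian f) := by
  rw [laplacian_eq hf]
  refine continuous_finsetSum _ fun i _ => ?_
  exact (pd_contDiff (m := 0) i (pd_contDiff (m := 1) i hf (by norm_num)) (by norm_num)).continuous

lemma laplacian_zero_off {f : EuclideanSpace ℝ (Fin N) → ℝ} (hf : ContDiff ℝ 2 f)
    {x : EuclideanSpace ℝ (Fin N)} (hx : x ∉ tsupport f) : laplacian f x = 0 := by
  rw [laplacian_eq hf]
  refine Finset.sum_eq_zero fun i _ => ?_
  exact image_eq_zero_of_notMem_tsupport fun h => hx (pd_tsupp i _ (pd_tsupp i _ h))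

lemma laplacian_supp {f : EuclideanSpace ℝ (Fin N) → ℝ} (hf : ContDiff ℝ 2 f)
    (hs : HasCompactSupport f) : HasCompactSupport (laplacian f) :=
  HasCompactSupport.intro hs fun _ hx => laplacian_zero_off hf hx

lemma pd_mul (i : Fin N) {f g : EuclideanSpace ℝ (Fin N) → ℝ}
    (hf : Differentiable ℝ f) (hg : Differentiable ℝ g) :
    pd i (fun x => f x * g x) = fun x => f x * pd i g x + pd i f x * g x := by
  ext x
  unfold pd
  rw [fderiv_fun_mul (hf x) (hg x)]
  simp [mul_comm]

lemma pd_add (i : Fin N) {f g : EuclideanSpace ℝ (Fin N) → ℝ}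
    (hf : Differentiable ℝ f) (hg : Differentiable ℝ g) :
    pd i (fun x => f x + g x) = fun x => pd i f x + pd i g x := by
  ext x
  unfold pd
  rw [fderiv_fun_add (hf x) (hg x)]
  simp

lemma pd_one_sub (i : Fin N) (g : EuclideanSpace ℝ (Fin N) → ℝ) :
    pd i (fun x => 1 - g x) = fun x => - pd i g x := by
  ext x
  unfold pd
  rw [fderiv_const_sub]
  simp

lemma pd_neg (i : Fin N) (g : EuclideanSpace ℝ (Fin N) → ℝ) :
    pd i (fun x => - g x) = fun x => - pd i g x := by
  ext x
  unfold pd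
  rw [fderiv_fun_neg]
  simp

lemma laplacian_mul_one_sub {f g : EuclideanSpace ℝ (Fin N) → ℝ}
    (hf : ContDiff ℝ 2 f) (hg : ContDiff ℝ 2 g) (x : EuclideanSpace ℝ (Fin N)) :
    laplacian (fun y => f y * (1 - g y)) x =
      (1 - g x) * laplacian f x - f x * laplacian g x - ∑ i, 2 * (pd i f x * pd i g x) := by
  have hg' : ContDiff ℝ 2 (fun y => 1 - g y) := contDiff_const.sub hg
  rw [laplacian_eq hf, laplacian_eq hg, laplacian_eq (hf.mul hg')]
  simp only [Finset.mul_sum, ← Finset.sum_sub_distrib]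
  refine Finset.sum_congr rfl fun i _ => ?_
  have d1 : ∀ {h : EuclideanSpace ℝ (Fin N) → ℝ}, ContDiff ℝ 2 h → Differentiable ℝ h :=
    fun h => h.differentiable (by norm_num)
  have d2 : ∀ {h : EuclideanSpace ℝ (Fin N) → ℝ}, ContDiff ℝ 2 h → Differentiable ℝ (pd i h) :=
    fun h => (pd_contDiff (m := 1) i h (by norm_num)).differentiable (by norm_num)
  rw [pd_mul i (d1 hf) (d1 hg'), pd_one_sub]
  have e1 : Differentiable ℝ (fun x => - pd i g x) := (d2 hg).neg
  rw [pd_add i (f := fun x => f x * (fun x => - pd i g x) x)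
      (g := fun x => pd i f x * (1 - g x)) ((d1 hf).mul e1) ((d2 hf).mul (d1 hg')),
    pd_mul i (d1 hf) e1, pd_mul i (d2 hf) (d1 hg'), pd_one_sub, pd_neg]
  ring

/-- Energy identity. -/
lemma energy {f : EuclideanSpace ℝ (Fin N) → ℝ}
    (hf : ContDiff ℝ 2 f) (hs : HasCompactSupport f) :
    ∫ x, ∑ i, (pd i f x) ^ 2 = - ∫ x, f x * laplacian f x := by
  have c1 : ∀ i, ContDiff ℝ 1 (pd i f) := fun i => pd_contDiff i hf (by norm_num)
  have c0 : ∀ i, Continuous (pd i (pd i f)) := fun i =>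
    (pd_contDiff (m := 0) i (c1 i) (by norm_num)).continuous
  have i1 : ∀ i, Integrable (fun x => (pd i f x) ^ 2) := fun i => by
    have : Integrable (fun x => pd i f x * pd i f x) :=
      ((c1 i).continuous.mul (c1 i).continuous).integrable_of_hasCompactSupport
        ((pd_supp i hs).mul_right)
    simpa [pow_two] using this
  have i2 : ∀ i, Integrable (fun x => f x * pd i (pd i f) x) := fun i =>
    (hf.continuous.mul (c0 i)).integrable_of_hasCompactSupport hs.mul_right
  rw [laplacian_eq hf]
  simp only [Finset.mul_sum]
  rw [integral_finsetSum _ fun i _ => i1 i, integral_finsetSum _ fun i _ => i2 i,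
    ← Finset.sum_neg_distrib]
  refine Finset.sum_congr rfl fun i _ => ?_
  have := integral_mul_fderiv_eq_neg_fderiv_mul_of_integrable (μ := (volume : Measure (EuclideanSpace ℝ (Fin N))))
    (f := f) (g := pd i f)
    (v := EuclideanSpace.single i (1 : ℝ)) (by simpa [pow_two, pd] using i1 i) (i2 i)
    ((hf.continuous.mul (c1 i).continuous).integrable_of_hasCompactSupport hs.mul_right)
    (fun x _ => hf.differentiable (by norm_num) x)
    (fun x _ => (c1 i).differentiable (by norm_num) x)
  change ∫ x, f x * pd i (pd i f) x = -∫ x, pd i f x * pd i f x at this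
  rw [this]
  simp [pow_two]

lemma bdd_of_supp {f : EuclideanSpace ℝ (Fin N) → ℝ}
    (hf : Continuous f) (hs : HasCompactSupport f) : ∃ C, 0 ≤ C ∧ ∀ x, |f x| ≤ C := by
  obtain ⟨C, hC⟩ := hf.bounded_above_of_compact_support hs
  exact ⟨C, (norm_nonneg _).trans (hC 0), hC⟩

end helpers

/-- Moderate-solution case of Theorem E: a nonnegative solution of
`-Δu + e^u - 1 = 0` in `Ω \ K` with `e^u ∈ L¹(Ω \ K)` extends distributionally
to all of `Ω`, provided there are `η_n ∈ C²_c(Ω)`, `0 ≤ η_n ≤ 1`, `η_n = 1` near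
`K`, with `‖Δη_n‖_{L_{P*}} + ‖η_n‖_{L¹} → 0`. -/
theorem removable_singularity_moderate {N : ℕ}
    (Ω : Set (EuclideanSpace ℝ (Fin N))) (hΩo : IsOpen Ω)
    (hΩb : Bornology.IsBounded Ω)
    (K : Set (EuclideanSpace ℝ (Fin N))) (hK : IsCompact K) (hKΩ : K ⊆ Ω)
    (hK0 : volume K = 0)
    (u : EuclideanSpace ℝ (Fin N) → ℝ) (hum : Measurable u) (hu0 : ∀ x, 0 ≤ u x)
    (huexp : IntegrableOn (fun x => Real.exp (u x)) (Ω \ K))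
    (hsol : ∀ ζ : EuclideanSpace ℝ (Fin N) → ℝ, ContDiff ℝ 2 ζ →
      HasCompactSupport ζ → tsupport ζ ⊆ Ω \ K →
      ∫ x in Ω \ K, (-(u x) * laplacian ζ x + (Real.exp (u x) - 1) * ζ x) = 0)
    (η : ℕ → EuclideanSpace ℝ (Fin N) → ℝ)
    (hηreg : ∀ n, ContDiff ℝ 2 (η n)) (hηsupp : ∀ n, HasCompactSupport (η n))
    (hηsub : ∀ n, tsupport (η n) ⊆ Ω) (hη01 : ∀ n x, 0 ≤ η n x ∧ η n x ≤ 1)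
    (hη1 : ∀ n, ∃ V : Set (EuclideanSpace ℝ (Fin N)), IsOpen V ∧ K ⊆ V ∧
      ∀ x ∈ V, η n x = 1)
    (c : ℕ → ℝ) (hc0 : ∀ n, 0 < c n)
    (hcnorm : ∀ n, ∫ x in Ω, Pstar (laplacian (η n) x / c n) ≤ 1)
    (hto0 : Tendsto (fun n => c n + ∫ x in Ω, |η n x|) atTop (𝓝 0)) :
    ∀ ζ : EuclideanSpace ℝ (Fin N) → ℝ, ContDiff ℝ 2 ζ →
      HasCompactSupport ζ → tsupport ζ ⊆ Ω →
      ∫ x in Ω, (-(u x) * laplacian ζ x + (Real.exp (u x) - 1) * ζ x) = 0 := by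
  intro ζ hζ hζs hζΩ
  have hres : (volume : Measure (EuclideanSpace ℝ (Fin N))).restrict (Ω \ K)
      = volume.restrict Ω := Measure.restrict_congr_set (sdiff_null_ae_eq_self hK0)
  unfold IntegrableOn at huexp
  rw [hres] at huexp hsol
  set μ := (volume : Measure (EuclideanSpace ℝ (Fin N))).restrict Ω with hμ
  have hfin : IsFiniteMeasure μ := ⟨by
    rw [hμ, Measure.restrict_apply_univ]; exact hΩb.measure_lt_top⟩
  -- integrability of powers of u
  have hu1 : Integrable u μ := by
    refine huexp.mono' hum.aestronglyMeasurable (Eventually.of_forall fun x => ?_)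
    rw [Real.norm_of_nonneg (hu0 x)]
    linarith [Real.add_one_le_exp (u x)]
  have hu2 : Integrable (fun x => (u x) ^ 2) μ := by
    refine (huexp.const_mul 2).mono' (hum.pow_const 2).aestronglyMeasurable
      (Eventually.of_forall fun x => ?_)
    rw [Real.norm_of_nonneg (by positivity)]
    linarith [Real.quadratic_le_exp_of_nonneg (hu0 x), hu0 x]
  have hbmul : ∀ {g h : EuclideanSpace ℝ (Fin N) → ℝ}, Integrable g μ → Continuous h →
      HasCompactSupport h → Integrable (fun x => g x * h x) μ := by
    intro g h hg hh hs
    obtain ⟨C, -, hC⟩ := bdd_of_supp hh hs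
    exact hg.mul_bdd hh.aestronglyMeasurable (Eventually.of_forall hC)
  have hcint : ∀ {h : EuclideanSpace ℝ (Fin N) → ℝ}, Continuous h →
      HasCompactSupport h → Integrable h μ := fun hh hs =>
    (hh.integrable_of_hasCompactSupport hs).restrict
  -- bounds on ζ
  have hζ1 : ∀ i, Continuous (pd i ζ) := fun i =>
    (pd_contDiff (m := 1) i hζ (by norm_num)).continuous
  obtain ⟨M, hM0, hM⟩ : ∃ M, 0 ≤ M ∧ ∀ x, |ζ x| ≤ M ∧ ∀ i, |pd i ζ x| ≤ M := by
    obtain ⟨A, hA0, hA⟩ := bdd_of_supp hζ.continuous hζs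
    choose B hB0 hB using fun i => bdd_of_supp (hζ1 i) (pd_supp i hζs)
    have hS : 0 ≤ ∑ i, B i := Finset.sum_nonneg fun i _ => hB0 i
    refine ⟨A + ∑ i, B i, by positivity, fun x => ⟨by linarith [hA x], fun i => ?_⟩⟩
    have := Finset.single_le_sum (fun i _ => hB0 i) (Finset.mem_univ i)
    linarith [hB i x]
  set F : EuclideanSpace ℝ (Fin N) → ℝ :=
    fun x => -(u x) * laplacian ζ x + (Real.exp (u x) - 1) * ζ x with hF
  have hFint : Integrable F μ :=
    (hbmul hu1.neg (laplacian_continuous hζ) (laplacian_supp hζ hζs)).add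
      (hbmul (huexp.sub (integrable_const 1)) hζ.continuous hζs)
  set W : ℝ := (μ Set.univ).toReal with hW
  set U2 : ℝ := ∫ x, (u x) ^ 2 ∂μ with hU2
  set E : ℝ := ∫ x, Real.exp (u x) ∂μ with hE
  -- Orlicz quantities
  have hPint : ∀ n, Integrable (fun x => Pstar (laplacian (η n) x / c n)) μ := fun n => by
    refine hcint (Pstar_continuous.comp ((laplacian_continuous (hηreg n)).div_const _)) ?_
    refine HasCompactSupport.intro (hηsupp n) fun x hx => ?_
    simp [laplacian_zero_off (hηreg n) hx, Pstar_zero]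
  have hη1c : ∀ n i, Continuous (pd i (η n)) := fun n i =>
    (pd_contDiff (m := 1) i (hηreg n) (by norm_num)).continuous
  have hgrad : ∀ n, ∫ x, ∑ i, (pd i (η n) x) ^ 2 ∂μ ≤ c n * (1 + Real.exp 1 * W) := by
    intro n
    have e1 : ∫ x, ∑ i, (pd i (η n) x) ^ 2 ∂μ = ∫ x, ∑ i, (pd i (η n) x) ^ 2 := by
      refine setIntegral_eq_integral_of_forall_compl_eq_zero fun x hx => ?_
      refine Finset.sum_eq_zero fun i _ => ?_
      rw [image_eq_zero_of_notMem_tsupport fun h => hx (hηsub n (pd_tsupp i _ h))]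
      simp
    have e2 : ∫ x, η n x * laplacian (η n) x ∂μ = ∫ x, η n x * laplacian (η n) x := by
      refine setIntegral_eq_integral_of_forall_compl_eq_zero fun x hx => ?_
      rw [laplacian_zero_off (hηreg n) fun h => hx (hηsub n h), mul_zero]
    rw [e1, energy (hηreg n) (hηsupp n), ← e2, ← integral_neg]
    calc ∫ x, -(η n x * laplacian (η n) x) ∂μ
        ≤ ∫ x, c n * (Pstar (laplacian (η n) x / c n) + Real.exp 1) ∂μ := by
          refine integral_mono ?_ (((hPint n).add (integrable_const _)).const_mul _) fun x => ?_
          · exact (hcint ((hηreg n).continuous.mul (laplacian_continuous (hηreg n)))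
              (hηsupp n).mul_right).neg
          · have hy := young_aux 1 (laplacian (η n) x / c n)
            have h3 : |laplacian (η n) x| = c n * |laplacian (η n) x / c n| := by
              rw [abs_div, abs_of_pos (hc0 n)]; field_simp [(hc0 n).ne']
            have h4 : -(η n x * laplacian (η n) x) ≤ |laplacian (η n) x| := by
              refine (neg_le_abs _).trans ?_
              rw [abs_mul, abs_of_nonneg (hη01 n x).1]
              exact mul_le_of_le_one_left (abs_nonneg _) (hη01 n x).2
            refine h4.trans ?_
            rw [h3]
            exact mul_le_mul_of_nonneg_left (by linarith) (hc0 n).le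
      _ = c n * ((∫ x, Pstar (laplacian (η n) x / c n) ∂μ) + Real.exp 1 * W) := by
          rw [integral_const_mul, integral_add (hPint n) (integrable_const _), integral_const]
          simp [hW, Measure.real, mul_comm]
      _ ≤ _ := mul_le_mul_of_nonneg_left (by linarith [hcnorm n]) (hc0 n).le
  -- key estimate
  have hkey : ∀ n, |∫ x, F x ∂μ| ≤ (∫ x, |F x| * η n x ∂μ) +
      (M * (N * Real.sqrt (c n) * U2 + Real.sqrt (c n) * (1 + Real.exp 1 * W))
        + M * (c n * (E + 1))) := by
    intro n
    obtain ⟨V, hVo, hKV, hV1⟩ := hη1 n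
    have hs0 : 0 < Real.sqrt (c n) := Real.sqrt_pos.2 (hc0 n)
    have hss : Real.sqrt (c n) * Real.sqrt (c n) = c n := Real.mul_self_sqrt (hc0 n).le
    set s := Real.sqrt (c n)
    set R : EuclideanSpace ℝ (Fin N) → ℝ := fun x =>
      u x * (ζ x * laplacian (η n) x + ∑ i, 2 * (pd i ζ x * pd i (η n) x)) with hR
    have hcont : Continuous (fun x => ζ x * laplacian (η n) x
        + ∑ i, 2 * (pd i ζ x * pd i (η n) x)) := by
      refine (hζ.continuous.mul (laplacian_continuous (hηreg n))).add ?_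
      exact continuous_finsetSum _ fun i _ =>
        continuous_const.mul ((hζ1 i).mul (hη1c n i))
    have hRint : Integrable R μ := by
      refine hbmul hu1 hcont ?_
      refine HasCompactSupport.intro hζs fun x hx => ?_
      have : ∀ i, pd i ζ x = 0 := fun i =>
        image_eq_zero_of_notMem_tsupport fun h => hx (pd_tsupp i _ h)
      simp [this, image_eq_zero_of_notMem_tsupport hx]
    have hFη : Integrable (fun x => F x * η n x) μ :=
      hbmul hFint (hηreg n).continuous (hηsupp n)
    have hts : tsupport (fun y => ζ y * (1 - η n y)) ⊆ Ω \ K := by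
      intro x hx
      refine ⟨hζΩ (closure_mono (fun y hy => ?_) hx), fun hxK => ?_⟩
      · intro h0
        exact hy (by simp [h0])
      · have : (fun y => ζ y * (1 - η n y)) =ᶠ[𝓝 x] 0 := by
          filter_upwards [hVo.mem_nhds (hKV hxK)] with y hy
          simp [hV1 y hy]
        exact (notMem_tsupport_iff_eventuallyEq.2 this) hx
    have h0 := hsol (fun y => ζ y * (1 - η n y)) (hζ.mul (contDiff_const.sub (hηreg n)))
      hζs.mul_right hts
    have h1 : ∫ x, ((F x - F x * η n x) + R x) ∂μ = 0 := by
      rw [← h0]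
      refine integral_congr_ae (Eventually.of_forall fun x => ?_)
      simp only [hF, hR]
      rw [laplacian_mul_one_sub hζ (hηreg n)]
      ring
    rw [integral_add (f := fun x => F x - F x * η n x) (hFint.sub hFη) hRint, integral_sub hFint hFη] at h1
    have h2 : ∫ x, F x ∂μ = ∫ x, F x * η n x ∂μ - ∫ x, R x ∂μ := by linarith
    have h3 : |∫ x, F x * η n x ∂μ| ≤ ∫ x, |F x| * η n x ∂μ := by
      refine abs_integral_le_integral_abs.trans (le_of_eq ?_)
      refine integral_congr_ae (Eventually.of_forall fun x => ?_)
      simp only [abs_mul, abs_of_nonneg (hη01 n x).1]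
    have hgi : Integrable (fun x => ∑ i, (pd i (η n) x) ^ 2) μ := by
      refine hcint (continuous_finsetSum _ fun i _ => (hη1c n i).pow 2) ?_
      refine HasCompactSupport.intro (hηsupp n) fun x hx => ?_
      refine Finset.sum_eq_zero fun i _ => ?_
      rw [image_eq_zero_of_notMem_tsupport fun h => hx (pd_tsupp i _ h)]
      simp
    have hpt : ∀ x, |R x| ≤ M * (N * s * (u x) ^ 2 + s⁻¹ * ∑ i, (pd i (η n) x) ^ 2)
        + M * (c n * (Real.exp (u x) + Pstar (laplacian (η n) x / c n))) := by
      intro x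
      have hy := young_aux (u x) (laplacian (η n) x / c n)
      have e3 : |laplacian (η n) x| = c n * |laplacian (η n) x / c n| := by
        rw [abs_div, abs_of_pos (hc0 n)]; field_simp [(hc0 n).ne']
      have a1 : |u x * (ζ x * laplacian (η n) x)| ≤
          M * (c n * (Real.exp (u x) + Pstar (laplacian (η n) x / c n))) := by
        rw [abs_mul, abs_mul, abs_of_nonneg (hu0 x)]
        calc u x * (|ζ x| * |laplacian (η n) x|)
            = |ζ x| * (c n * (u x * |laplacian (η n) x / c n|)) := by rw [e3]; ring
          _ ≤ M * (c n * (u x * |laplacian (η n) x / c n|)) := by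
              refine mul_le_mul_of_nonneg_right (hM x).1 ?_
              exact mul_nonneg (hc0 n).le (mul_nonneg (hu0 x) (abs_nonneg _))
          _ ≤ _ := by
              refine mul_le_mul_of_nonneg_left (mul_le_mul_of_nonneg_left ?_ (hc0 n).le) hM0
              linarith [hu0 x]
      have a2 : |u x * ∑ i, 2 * (pd i ζ x * pd i (η n) x)| ≤
          M * (N * s * (u x) ^ 2 + s⁻¹ * ∑ i, (pd i (η n) x) ^ 2) := by
        have : M * (N * s * (u x) ^ 2 + s⁻¹ * ∑ i, (pd i (η n) x) ^ 2)
            = ∑ i, M * (s * (u x) ^ 2 + s⁻¹ * (pd i (η n) x) ^ 2) := by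
          rw [← Finset.mul_sum, Finset.sum_add_distrib, Finset.mul_sum _ _ s⁻¹]
          simp [mul_assoc]
        rw [this, Finset.mul_sum]
        refine (Finset.abs_sum_le_sum_abs _ _).trans (Finset.sum_le_sum fun i _ => ?_)
        have b1 : 2 * (u x * |pd i (η n) x|) ≤ s * (u x) ^ 2 + s⁻¹ * (pd i (η n) x) ^ 2 := by
          have : s * (u x) ^ 2 + s⁻¹ * |pd i (η n) x| ^ 2 - 2 * (u x * |pd i (η n) x|)
              = s⁻¹ * (s * u x - |pd i (η n) x|) ^ 2 := by
            field_simp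
            ring
          have h' : 0 ≤ s⁻¹ * (s * u x - |pd i (η n) x|) ^ 2 := by positivity
          rw [sq_abs] at this
          linarith
        rw [abs_mul, abs_mul, abs_mul, abs_of_nonneg (hu0 x), abs_two]
        calc u x * (2 * (|pd i ζ x| * |pd i (η n) x|))
            = |pd i ζ x| * (2 * (u x * |pd i (η n) x|)) := by ring
          _ ≤ M * (2 * (u x * |pd i (η n) x|)) :=
              mul_le_mul_of_nonneg_right ((hM x).2 i)
                (mul_nonneg two_pos.le (mul_nonneg (hu0 x) (abs_nonneg _)))
          _ ≤ _ := mul_le_mul_of_nonneg_left b1 hM0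
      simp only [hR]
      rw [mul_add]
      refine (abs_add_le _ _).trans ?_
      linarith
    have j1 : Integrable (fun x => M * (N * s * (u x) ^ 2 + s⁻¹ * ∑ i, (pd i (η n) x) ^ 2)) μ :=
      ((hu2.const_mul _).add (hgi.const_mul _)).const_mul _
    have j2 : Integrable (fun x => M * (c n * (Real.exp (u x)
        + Pstar (laplacian (η n) x / c n)))) μ :=
      ((huexp.add (hPint n)).const_mul _).const_mul _
    have h4 : |∫ x, R x ∂μ| ≤
        M * (N * s * U2 + s * (1 + Real.exp 1 * W)) + M * (c n * (E + 1)) := by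
      refine abs_integral_le_integral_abs.trans ?_
      refine (integral_mono hRint.abs (j1.add j2) hpt).trans ?_
      simp only [Pi.add_apply]
      rw [integral_add j1 j2, integral_const_mul, integral_const_mul, integral_const_mul,
        integral_add (hu2.const_mul _) (hgi.const_mul _), integral_add huexp (hPint n),
        integral_const_mul, integral_const_mul]
      have k1 : s⁻¹ * ∫ x, ∑ i, (pd i (η n) x) ^ 2 ∂μ ≤ s * (1 + Real.exp 1 * W) := by
        refine (mul_le_mul_of_nonneg_left (hgrad n) (inv_pos.2 hs0).le).trans (le_of_eq ?_)
        rw [← hss]; field_simp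
      refine add_le_add (mul_le_mul_of_nonneg_left (by linarith) hM0)
        (mul_le_mul_of_nonneg_left (mul_le_mul_of_nonneg_left ?_ (hc0 n).le) hM0)
      linarith [hcnorm n]
    rw [h2]
    refine (abs_sub _ _).trans ?_
    linarith
  -- limits
  have hi0 : ∀ n, 0 ≤ ∫ x, |η n x| ∂μ := fun n => integral_nonneg fun x => abs_nonneg _
  have hc : Tendsto c atTop (𝓝 0) :=
    squeeze_zero (fun n => (hc0 n).le) (fun n => by linarith [hi0 n]) hto0
  have hL : Tendsto (fun n => ∫ x, |η n x| ∂μ) atTop (𝓝 0) :=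
    squeeze_zero hi0 (fun n => by linarith [(hc0 n).le]) hto0
  have hmeas : TendstoInMeasure μ η atTop (0 : EuclideanSpace ℝ (Fin N) → ℝ) := by
    refine tendstoInMeasure_of_tendsto_eLpNorm (p := 1) one_ne_zero
      (fun n => (hηreg n).continuous.aestronglyMeasurable) aestronglyMeasurable_zero ?_
    have : ∀ n, eLpNorm (η n - 0) 1 μ = ENNReal.ofReal (∫ x, |η n x| ∂μ) := fun n => by
      rw [sub_zero, eLpNorm_one_eq_lintegral_enorm,
        ← ofReal_integral_norm_eq_lintegral_enorm (hcint (hηreg n).continuous (hηsupp n))]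
      rfl
    simp only [this]
    simpa [Function.comp_def] using (ENNReal.continuous_ofReal.tendsto 0).comp hL
  obtain ⟨ns, hns, hae⟩ := hmeas.exists_seq_tendsto_ae
  have hdom : Tendsto (fun k => ∫ x, |F x| * η (ns k) x ∂μ) atTop (𝓝 0) := by
    have := tendsto_integral_of_dominated_convergence (μ := μ)
      (F := fun k x => |F x| * η (ns k) x) (f := fun _ => 0) (fun x => |F x|)
      (fun k => (hbmul hFint.abs (hηreg _).continuous (hηsupp _)).aestronglyMeasurable)
      hFint.abs (fun k => Eventually.of_forall fun x => ?_) ?_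
    · simpa using this
    · rw [Real.norm_eq_abs, abs_mul, abs_abs, abs_of_nonneg (hη01 _ x).1]
      exact mul_le_of_le_one_right (abs_nonneg _) (hη01 _ x).2
    · filter_upwards [hae] with x hx
      simpa using hx.const_mul (|F x|)
  have hck : Tendsto (fun k => c (ns k)) atTop (𝓝 0) := hc.comp hns.tendsto_atTop
  have hsk : Tendsto (fun k => Real.sqrt (c (ns k))) atTop (𝓝 0) := by
    simpa using hck.sqrt
  have hlim : Tendsto (fun k => (∫ x, |F x| * η (ns k) x ∂μ) +
      (M * (N * Real.sqrt (c (ns k)) * U2 + Real.sqrt (c (ns k)) * (1 + Real.exp 1 * W))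
        + M * (c (ns k) * (E + 1)))) atTop (𝓝 0) := by
    have := hdom.add (((((hsk.const_mul (N : ℝ)).mul_const U2).add
      (hsk.mul_const (1 + Real.exp 1 * W))).const_mul M).add
      ((hck.mul_const (E + 1)).const_mul M))
    simpa using this
  have := ge_of_tendsto' hlim fun k => hkey (ns k)
  exact abs_eq_zero.1 (le_antisymm this (abs_nonneg _))
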